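/- Suppose φ : ℝ → ℝ is even, continuous, integrable, φ(0) = 1, and its Fourier transform φ̂ is nonnegative, integrable, and real-analytic on ℝ. Then for every λ > 0 the function P_∞(λ, ·) is not identically zero, i.e. ‖P_∞(λ, ·)‖_∞ > 0. -/

import Mathlib

open MeasureTheory Real

/-- Fourier transform normalized as `f̂(ω) = (1/√(2π)) ∫ f(x) e^{-iωx} dx`. -/
noncomputable def FT (f : ℝ → ℝ) (w : ℝ) : ℂ :=
  (1 / Real.sqrt (2 * Real.pi)) * ∫ x : ℝ, (f x : ℂ) * Complex.exp (-(Complex.I * w * x))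

/-- The Fourier cosine coefficients of the auxiliary function `H`:
`a 0 = 3/4`, `a 1 = 4/(3π)`, `a 2 = -1/4`, and
`a k = -4 sin(kπ/2) / (π k (k² - 4))` for `k ≥ 3`. -/
noncomputable def a : ℕ → ℝ
  | 0 => 3 / 4
  | 1 => 4 / (3 * Real.pi)
  | 2 => -(1 / 4)
  | k => -4 * Real.sin (k * Real.pi / 2) / (Real.pi * k * (k ^ 2 - 4))

/-- `A_∞(λ) = -Σ_{k=1}^∞ a_k φ(λk)`. -/
noncomputable def Ainf (φ : ℝ → ℝ) (lam : ℝ) : ℝ :=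
  -∑' k : ℕ, a (k + 1) * φ (lam * (k + 1))

/-- `P_∞(λ, x) = 2 A_∞(λ) φ(x) + Σ_{k=1}^∞ a_k (φ(x + λk) + φ(x - λk))`. -/
noncomputable def Pinf (φ : ℝ → ℝ) (lam x : ℝ) : ℝ :=
  2 * Ainf φ lam * φ x +
    ∑' k : ℕ, a (k + 1) * (φ (x + lam * (k + 1)) + φ (x - lam * (k + 1)))


lemma a_ge_three (k : ℕ) : a (k + 3) =
    -4 * Real.sin (((k : ℝ) + 3) * Real.pi / 2) /
      (Real.pi * ((k : ℝ) + 3) * (((k : ℝ) + 3) ^ 2 - 4)) := by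
  simp [a]

lemma abs_a_le (k : ℕ) : |a (k + 3)| ≤ 1 / ((k : ℝ) + 1) ^ 2 := by
  rw [a_ge_three, abs_div, abs_mul]
  have hk : (0 : ℝ) ≤ k := Nat.cast_nonneg k
  have hpi := Real.pi_gt_three
  have h1 : |Real.sin (((k : ℝ) + 3) * Real.pi / 2)| ≤ 1 := Real.abs_sin_le_one _
  have hden : 4 * ((k : ℝ) + 1) ^ 2 ≤
      Real.pi * ((k : ℝ) + 3) * (((k : ℝ) + 3) ^ 2 - 4) := by
    have e : ((k : ℝ) + 3) ^ 2 - 4 = (k + 1) * (k + 5) := by ring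
    rw [e]
    have : (4 : ℝ) ≤ Real.pi * (k + 3) := by nlinarith
    have h2 : ((k : ℝ) + 1) ^ 2 ≤ (k + 1) * (k + 5) := by nlinarith
    exact mul_le_mul this h2 (by positivity) (by positivity)
  have hpos : 0 < 4 * ((k : ℝ) + 1) ^ 2 := by positivity
  rw [abs_of_pos (lt_of_lt_of_le hpos hden)]
  calc _ ≤ (4 : ℝ) / (4 * ((k : ℝ) + 1) ^ 2) := by
        apply div_le_div₀ (by norm_num) _ hpos hden
        norm_num
        linarith
    _ = _ := by field_simp

lemma summable_abs_a : Summable (fun k : ℕ => |a (k + 1)|) := by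
  rw [← summable_nat_add_iff 2]
  refine Summable.of_nonneg_of_le (fun _ => abs_nonneg _) (fun k => abs_a_le k) ?_
  have := (summable_nat_add_iff 1).2 (Real.summable_one_div_nat_pow.2 (one_lt_two))
  simpa using this

lemma integral_cos_nat (m : ℕ) : (∫ t in (0 : ℝ)..(2 * Real.pi), Real.cos ((m + 1 : ℝ) * t)) = 0 := by
  have hm : (m + 1 : ℝ) ≠ 0 := by positivity
  rw [intervalIntegral.integral_comp_mul_left (fun t => Real.cos t) hm, integral_cos]
  have : Real.sin ((m + 1 : ℝ) * (2 * Real.pi)) = 0 := by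
    have := Real.sin_nat_mul_pi (2 * (m + 1))
    rw [← this]; push_cast; ring_nf
  simp [this]

lemma integral_cos_cos (k : ℕ) :
    (∫ t in (0 : ℝ)..(2 * Real.pi), a (k + 1) * Real.cos ((k + 1 : ℝ) * t) * Real.cos t) =
      if k = 0 then a 1 * Real.pi else 0 := by
  have e : ∀ t : ℝ, a (k + 1) * Real.cos ((k + 1 : ℝ) * t) * Real.cos t =
      a (k + 1) / 2 * (Real.cos (((k + 1 : ℕ) + 1 : ℝ) * t) + Real.cos ((k : ℝ) * t)) := by
    intro t
    have h1 : (((k + 1 : ℕ) + 1 : ℝ) * t) = (k + 1 : ℝ) * t + t := by push_cast; ring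
    have h2 : (k : ℝ) * t = (k + 1 : ℝ) * t - t := by ring
    rw [h1, h2, Real.cos_add, Real.cos_sub]; ring
  simp_rw [e]
  rw [intervalIntegral.integral_const_mul, intervalIntegral.integral_add
    (Continuous.intervalIntegrable (by fun_prop) _ _)
    (Continuous.intervalIntegrable (by fun_prop) _ _), integral_cos_nat]
  rcases k with _ | k
  · simp; ring
  · have := integral_cos_nat k
    push_cast
    rw [this]; simp

/-- The cosine series cannot be constant. -/
lemma cos_series_not_const (c : ℝ)
    (h : ∀ t : ℝ, ∑' k : ℕ, a (k + 1) * Real.cos ((k + 1 : ℝ) * t) = c) : False := by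
  have hle : ∀ (k : ℕ) (t : ℝ), ‖a (k + 1) * Real.cos ((k + 1 : ℝ) * t)‖ ≤ |a (k + 1)| := by
    intro k t
    rw [norm_mul, Real.norm_eq_abs, Real.norm_eq_abs]
    exact mul_le_of_le_one_right (abs_nonneg _) (Real.abs_cos_le_one _)
  have hs : HasSum (fun k : ℕ => ∫ t in (0 : ℝ)..(2 * Real.pi),
      a (k + 1) * Real.cos ((k + 1 : ℝ) * t) * Real.cos t)
      (∫ t in (0 : ℝ)..(2 * Real.pi), c * Real.cos t) := by
    refine intervalIntegral.hasSum_integral_of_dominated_convergence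
      (fun k _ => |a (k + 1)|) ?_ ?_ ?_ ?_ ?_
    · intro n
      exact Continuous.aestronglyMeasurable (by fun_prop)
    · intro n
      refine Filter.Eventually.of_forall fun t _ => ?_
      rw [norm_mul]
      exact (mul_le_of_le_one_right (norm_nonneg _) (Real.abs_cos_le_one _)).trans (hle n t)
    · exact Filter.Eventually.of_forall fun t _ => summable_abs_a
    · exact continuous_const.intervalIntegrable _ _
    · refine Filter.Eventually.of_forall fun t _ => ?_
      have := (Summable.of_norm_bounded summable_abs_a (fun k => hle k t)).hasSum
      rw [h t] at this
      exact this.mul_right _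
  simp_rw [integral_cos_cos] at hs
  have h2 := hs.unique (hasSum_ite_eq 0 (a 1 * Real.pi))
  rw [intervalIntegral.integral_const_mul, integral_cos] at h2
  simp [a] at h2

/-- The character used by `FT`. -/
lemma norm_char (w x : ℝ) : ‖Complex.exp (-(Complex.I * w * x))‖ = 1 := by
  rw [show -(Complex.I * w * x) = ((-(w * x) : ℝ) : ℂ) * Complex.I by push_cast; ring]
  exact Complex.norm_exp_ofReal_mul_I _

lemma char_integrable {f : ℝ → ℝ} (hf : Integrable f) (w : ℝ) :
    Integrable (fun x : ℝ => (f x : ℂ) * Complex.exp (-(Complex.I * w * x))) := by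
  refine (hf.ofReal (𝕜 := ℂ)).mul_bdd (c := 1) ?_ ?_
  · exact Continuous.aestronglyMeasurable (by fun_prop)
  · exact Filter.Eventually.of_forall fun x => (norm_char w x).le

lemma char_shift (f : ℝ → ℝ) (w s : ℝ) :
    (∫ x : ℝ, (f (x + s) : ℂ) * Complex.exp (-(Complex.I * w * x))) =
      Complex.exp (Complex.I * w * s) *
        ∫ x : ℝ, (f x : ℂ) * Complex.exp (-(Complex.I * w * x)) := by
  rw [← integral_const_mul, ← integral_add_right_eq_self
    (fun x : ℝ => Complex.exp (Complex.I * w * s) *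
      ((f x : ℂ) * Complex.exp (-(Complex.I * w * x)))) s]
  congr 1
  ext x
  rw [mul_left_comm, ← Complex.exp_add]
  congr 2
  push_cast; ring

lemma fourier_eq_FT (f : ℝ → ℝ) (w : ℝ) :
    FourierTransform.fourier (fun x => (f x : ℂ)) w =
      (Real.sqrt (2 * Real.pi) : ℂ) * FT f (2 * Real.pi * w) := by
  have h0 : (Real.sqrt (2 * Real.pi) : ℂ) ≠ 0 := by
    have : Real.sqrt (2 * Real.pi) ≠ 0 := by positivity
    exact_mod_cast this
  rw [FT, ← mul_assoc, mul_one_div_cancel h0, one_mul, Real.fourier_real_eq_integral_exp_smul]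
  congr 1
  ext x
  rw [smul_eq_mul, mul_comm]
  congr 2
  push_cast; ring

lemma inv_formula {φ : ℝ → ℝ} (hcont : Continuous φ) (hint : Integrable φ)
    (hFTint : Integrable (FT φ)) (x : ℝ) :
    (φ x : ℂ) = ∫ v : ℝ, Complex.exp (↑(2 * π * inner ℝ v x) * Complex.I) •
      ((Real.sqrt (2 * Real.pi) : ℂ) * FT φ (2 * Real.pi * v)) := by
  have e : FourierTransform.fourier (fun x => (φ x : ℂ)) =
      fun w => (Real.sqrt (2 * Real.pi) : ℂ) * FT φ (2 * Real.pi * w) :=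
    funext (fourier_eq_FT φ)
  have hi : Integrable (FourierTransform.fourier (fun x => (φ x : ℂ))) := by
    rw [e]
    exact (hFTint.comp_mul_left' (R := 2 * Real.pi) (by positivity)).const_mul _
  have hc : Continuous (fun x => (φ x : ℂ)) := by fun_prop
  have := congrFun (hc.fourierInv_fourier_eq hint.ofReal hi) x
  rw [e, Real.fourierInv_eq'] at this
  exact this.symm

lemma phi_bdd {φ : ℝ → ℝ} (hcont : Continuous φ) (hint : Integrable φ)
    (hFTint : Integrable (FT φ)) : ∃ C : ℝ, ∀ x, |φ x| ≤ C := by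
  refine ⟨∫ v : ℝ, ‖(Real.sqrt (2 * Real.pi) : ℂ) * FT φ (2 * Real.pi * v)‖, fun x => ?_⟩
  have h := inv_formula hcont hint hFTint x
  have h2 : |φ x| = ‖(φ x : ℂ)‖ := by simp
  rw [h2, h]
  refine (norm_integral_le_integral_norm _).trans (le_of_eq ?_)
  congr 1
  ext v
  rw [norm_smul, Complex.norm_exp_ofReal_mul_I, one_mul]

lemma pair_transform {φ : ℝ → ℝ} (hint : Integrable φ) (c s w : ℝ) :
    (∫ x : ℝ, ((c * (φ (x + s) + φ (x - s)) : ℝ) : ℂ) * Complex.exp (-(Complex.I * w * x))) =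
      2 * ((c * Real.cos (s * w) : ℝ) : ℂ) *
        ∫ x : ℝ, (φ x : ℂ) * Complex.exp (-(Complex.I * w * x)) := by
  have i1 := (char_integrable (hint.comp_add_right s) w).const_mul (c : ℂ)
  have i2 := (char_integrable (hint.comp_add_right (-s)) w).const_mul (c : ℂ)
  have e : ∀ x : ℝ, ((c * (φ (x + s) + φ (x - s)) : ℝ) : ℂ) * Complex.exp (-(Complex.I * w * x)) =
      (c : ℂ) * ((φ (x + s) : ℂ) * Complex.exp (-(Complex.I * w * x))) +
      (c : ℂ) * ((φ (x + -s) : ℂ) * Complex.exp (-(Complex.I * w * x))) := by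
    intro x
    rw [← sub_eq_add_neg]
    push_cast; ring
  simp_rw [e]
  rw [integral_add i1 i2, integral_const_mul, integral_const_mul, char_shift, char_shift]
  push_cast
  rw [Complex.cos]
  have h1 : (s : ℂ) * w * Complex.I = Complex.I * w * s := by ring
  have h2 : -((s : ℂ) * w) * Complex.I = Complex.I * w * -s := by ring
  rw [h1, h2]
  ring

/-- If `P` vanishes identically, then its transform gives a product identity. -/
lemma transform_zero {φ : ℝ → ℝ} (hint : Integrable φ) (lam : ℝ)
    (hsum : ∀ x, Summable fun k : ℕ =>
      a (k + 1) * (φ (x + lam * (k + 1)) + φ (x - lam * (k + 1))))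
    (hP : ∀ x, Pinf φ lam x = 0) (w : ℝ) :
    ((Ainf φ lam + ∑' k : ℕ, a (k + 1) * Real.cos ((k + 1 : ℝ) * (lam * w)) : ℝ) : ℂ) *
      FT φ w = 0 := by
  set I : ℂ := ∫ x : ℝ, (φ x : ℂ) * Complex.exp (-(Complex.I * w * x)) with hI
  set F : ℕ → ℝ → ℂ := fun k x =>
    ((a (k + 1) * (φ (x + lam * (k + 1)) + φ (x - lam * (k + 1))) : ℝ) : ℂ) *
      Complex.exp (-(Complex.I * w * x)) with hF
  have iR : ∀ k : ℕ, Integrable (fun x : ℝ =>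
      a (k + 1) * (φ (x + lam * (k + 1)) + φ (x - lam * (k + 1)))) := fun k =>
    ((hint.comp_add_right _).add (hint.comp_sub_right _)).const_mul _
  have iF : ∀ k, Integrable (F k) := fun k => char_integrable (iR k) w
  have sF : Summable fun k => ∫ x, ‖F k x‖ := by
    refine Summable.of_nonneg_of_le (fun k => integral_nonneg fun x => norm_nonneg _) ?_
      (summable_abs_a.mul_right (2 * ∫ x, |φ x|))
    intro k
    have j1 := (hint.comp_add_right (lam * (k + 1))).abs
    have j2 := (hint.comp_sub_right (lam * (k + 1))).abs
    calc ∫ x, ‖F k x‖ ≤ ∫ x, |a (k + 1)| *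
          (|φ (x + lam * (k + 1))| + |φ (x - lam * (k + 1))|) := by
          refine integral_mono (iF k).norm ((j1.add j2).const_mul _) fun x => ?_
          simp only [hF, norm_mul, norm_char, mul_one, Complex.norm_real, Real.norm_eq_abs,
            abs_mul]
          exact mul_le_mul_of_nonneg_left (abs_add_le _ _) (abs_nonneg _)
      _ = |a (k + 1)| * (2 * ∫ x, |φ x|) := by
          rw [integral_const_mul, integral_add j1 j2,
            integral_add_right_eq_self (fun x => |φ x|),
            integral_sub_right_eq_self (fun x => |φ x|)]
          ring
  have key := hasSum_integral_of_summable_integral_norm iF sF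
  have t1 : ∀ k : ℕ, ∫ x, F k x =
      ((a (k + 1) * Real.cos ((k + 1 : ℝ) * (lam * w)) : ℝ) : ℂ) * (2 * I) := by
    intro k
    simp only [hF]
    rw [pair_transform hint, show lam * ((k : ℝ) + 1) * w = (k + 1 : ℝ) * (lam * w) by ring]
    ring
  have t2 : ∫ x, ∑' k, F k x = -(2 * (Ainf φ lam : ℂ)) * I := by
    rw [hI, ← integral_const_mul]
    congr 1
    ext x
    simp only [hF]
    rw [tsum_mul_right, ← Complex.ofReal_tsum, ← mul_assoc]
    congr 1
    have := hP x
    rw [Pinf] at this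
    have h3 := eq_neg_of_add_eq_zero_right this
    rw [h3]; push_cast; ring
  simp_rw [t1] at key
  have k2 := key.tsum_eq
  rw [t2, tsum_mul_right, ← Complex.ofReal_tsum] at k2
  rw [FT, ← hI]
  rw [Complex.ofReal_add]
  linear_combination (1 / Real.sqrt (2 * Real.pi) : ℂ) / 2 * k2

theorem Pinf_not_identically_zero
    (φ : ℝ → ℝ) (heven : ∀ x, φ (-x) = φ x) (hcont : Continuous φ)
    (hint : Integrable φ) (hφ0 : φ 0 = 1)
    (hFTreal : ∀ w : ℝ, (FT φ w).im = 0)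
    (hFTnonneg : ∀ w : ℝ, 0 ≤ (FT φ w).re)
    (hFTint : Integrable (FT φ))
    (hFTanalytic : AnalyticOnNhd ℝ (fun w => (FT φ w).re) Set.univ)
    (lam : ℝ) (hlam : 0 < lam) :
    0 < ⨆ x, |Pinf φ lam x| := by
  obtain ⟨C, hC⟩ := phi_bdd hcont hint hFTint
  have hC0 : 0 ≤ C := (abs_nonneg _).trans (hC 0)
  have hle : ∀ x (k : ℕ), ‖a (k + 1) * (φ (x + lam * (k + 1)) + φ (x - lam * (k + 1)))‖ ≤
      |a (k + 1)| * (2 * C) := by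
    intro x k
    rw [norm_mul, Real.norm_eq_abs, Real.norm_eq_abs]
    refine mul_le_mul_of_nonneg_left ?_ (abs_nonneg _)
    refine (abs_add_le _ _).trans ?_
    linarith [hC (x + lam * (k + 1)), hC (x - lam * (k + 1))]
  have hS := summable_abs_a.mul_right (2 * C)
  have hsum : ∀ x, Summable fun k : ℕ =>
      a (k + 1) * (φ (x + lam * (k + 1)) + φ (x - lam * (k + 1))) := fun x =>
    Summable.of_norm_bounded hS (hle x)
  have hbdd : BddAbove (Set.range fun x => |Pinf φ lam x|) := by
    refine ⟨|2 * Ainf φ lam| * C + ∑' k : ℕ, |a (k + 1)| * (2 * C), ?_⟩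
    rintro _ ⟨x, rfl⟩
    simp only [Pinf]
    refine (abs_add_le _ _).trans (add_le_add ?_ ?_)
    · rw [abs_mul]
      exact mul_le_mul_of_nonneg_left (hC x) (abs_nonneg _)
    · exact tsum_of_norm_bounded hS.hasSum (hle x)
  by_contra hcon
  have hP : ∀ x, Pinf φ lam x = 0 := by
    intro x
    have h1 := le_ciSup hbdd x
    have h2 : |Pinf φ lam x| ≤ 0 := h1.trans (not_lt.1 hcon)
    exact abs_eq_zero.1 (le_antisymm h2 (abs_nonneg _))
  have hT := transform_zero hint lam hsum hP
  set G : ℝ → ℝ := fun w =>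
    Ainf φ lam + ∑' k : ℕ, a (k + 1) * Real.cos ((k + 1 : ℝ) * (lam * w)) with hG
  have hGcont : Continuous G := by
    refine continuous_const.add (continuous_tsum (u := fun k : ℕ => |a (k + 1)|) ?_
      summable_abs_a ?_)
    · intro k; fun_prop
    · intro k w
      rw [norm_mul, Real.norm_eq_abs, Real.norm_eq_abs]
      exact mul_le_of_le_one_right (abs_nonneg _) (Real.abs_cos_le_one _)
  by_cases hz : ∀ w, G w = 0
  · refine cos_series_not_const (-Ainf φ lam) fun t => ?_
    have h := hz (t / lam)
    simp only [hG, mul_div_cancel₀ t hlam.ne'] at h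
    linarith
  · push Not at hz
    obtain ⟨w0, hw0⟩ := hz
    have hev : (fun w => (FT φ w).re) =ᶠ[nhds w0] 0 := by
      filter_upwards [hGcont.continuousAt.eventually_ne hw0] with w hw
      have h := hT w
      have h' : ((G w : ℝ) : ℂ) ≠ 0 := by exact_mod_cast hw
      have h3 := (mul_eq_zero.1 h).resolve_left h'
      simp [h3]
    have hzero := hFTanalytic.eqOn_zero_of_preconnected_of_eventuallyEq_zero
      isPreconnected_univ (Set.mem_univ w0) hev
    have hFT0 : ∀ w, FT φ w = 0 := fun w =>
      Complex.ext (hzero (Set.mem_univ w)) (hFTreal w)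
    have h := inv_formula hcont hint hFTint 0
    simp [hFT0, hφ0] at h
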